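/- If x̄ is a local minimizer of the MPVC at which MPVC-GCQ holds, then x̄ is C_d-stationary for every d ∈ [0,1]^p and P_α-stationary for every α ∈ {0,1}^p. -/

import Mathlib

/-!
Since `xb` is a local minimizer, `-∇f(xb)` lies in the polar of the tangent cone, hence, by the
constraint qualification, in the polar of the MPVC-linearized cone. That cone is the union, over
subsets `β` of the biactive indices, of polyhedral cones: for `i ∉ β` one imposes `∇H_iᵀd = 0`, for
`i ∈ β` one imposes `∇H_iᵀd ≥ 0` and `∇G_iᵀd ≤ 0`. Farkas' lemma (`farkas`) on each piece gives,
for every `β`, multipliers with `μ_i = 0` for `i ∉ β` and `μ_i, ν_i ≥ 0` for `i ∈ β`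
(`branch_AStat`).

These finitely many multipliers are placed at the vertices of the cube `[0,1]^p` and interpolated
multilinearly; every interpolated multiplier is again weakly stationary (`weakMult_convex`). For
biactive `i` consider `F_i = min((1 - d_i) μ_i + d_i ν_i, μ_i)`. On the face `x_i = 0` only
`i ∉ β` contribute, so `μ_i = 0` and `F_i ≤ 0`; on the face `x_i = 1` only `i ∈ β` contribute, so
`F_i ≥ 0`. The Poincaré–Miranda theorem yields a common zero of the `F_i`, and `F_i = 0` is exactly
the `C_d` condition (`AStat_all_imp_CStat`). `P_α`-stationarity is `C_d`-stationarity with `d = α`.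

Poincaré–Miranda (`poincare_miranda`) is deduced from Kuhn's cubical analogue of Sperner's lemma
(`kuhn_lemma`): a grid on the cube carries labels `ℓ_j ∈ ZMod 2` that are `0` on `x_j = 0` and `1`
on `x_j = N`, and some grid cell sees both values of every `ℓ_j`. The proof is a discrete Stokes
argument. The cup product `δℓ_1 ∪ ⋯ ∪ δℓ_p` is a closed cubical cochain mod 2 (`cupProd_closed`);
summing it over all cells telescopes to the boundary, where by induction it equals `1`
(`sum_cupProd_eq_one`). So it is nonzero on some cell, which forces every `ℓ_j` to change there
(`cupProd_ne_zero`).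
-/

open Set Filter RealInnerProductSpace

noncomputable section

abbrev Rn (n : ℕ) := EuclideanSpace ℝ (Fin n)

/-- The tangent cone (Bouligand) to a set `F` at a point `x`. -/
def tangentCone' {n : ℕ} (F : Set (Rn n)) (x : Rn n) : Set (Rn n) :=
  {d | ∃ (xk : ℕ → Rn n) (tk : ℕ → ℝ),
    (∀ k, xk k ∈ F) ∧ (∀ k, 0 < tk k) ∧
    Tendsto xk atTop (nhds x) ∧ Tendsto tk atTop (nhds 0) ∧
    Tendsto (fun k => (tk k)⁻¹ • (xk k - x)) atTop (nhds d)}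

/-- The polar cone of a set. -/
def polarCone {n : ℕ} (C : Set (Rn n)) : Set (Rn n) :=
  {d | ∀ y ∈ C, ⟪d, y⟫ ≤ 0}

/-- α ∈ {0,1}^p -/
def IsBinaryVec {p : ℕ} (α : Fin p → ℝ) : Prop := ∀ i, α i = 0 ∨ α i = 1

/-- d ∈ [0,1]^p -/
def IsUnitIntervalVec {p : ℕ} (d : Fin p → ℝ) : Prop := ∀ i, d i ∈ Set.Icc (0:ℝ) 1

variable {n l m p : ℕ}

/-- The feasible set of the MPVC. -/
def MpvcFeasible (g : Fin l → Rn n → ℝ) (h : Fin m → Rn n → ℝ)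
    (G H : Fin p → Rn n → ℝ) : Set (Rn n) :=
  {x | (∀ i, g i x ≤ 0) ∧ (∀ i, h i x = 0) ∧ (∀ i, 0 ≤ H i x) ∧
    (∀ i, G i x * H i x ≤ 0)}

/-- The MPVC-linearized tangent cone at xb. -/
def MpvcLinCone (g : Fin l → Rn n → ℝ) (h : Fin m → Rn n → ℝ)
    (G H : Fin p → Rn n → ℝ) (xb : Rn n) : Set (Rn n) :=
  {d | (∀ i, g i xb = 0 → ⟪gradient (g i) xb, d⟫ ≤ 0) ∧
    (∀ i, ⟪gradient (h i) xb, d⟫ = 0) ∧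
    (∀ i, G i xb = 0 → 0 < H i xb → ⟪gradient (G i) xb, d⟫ ≤ 0) ∧
    (∀ i, 0 < G i xb → H i xb = 0 → ⟪gradient (H i) xb, d⟫ = 0) ∧
    (∀ i, (G i xb = 0 ∧ H i xb = 0) ∨ (G i xb < 0 ∧ H i xb = 0) →
      0 ≤ ⟪gradient (H i) xb, d⟫) ∧
    (∀ i, G i xb = 0 → H i xb = 0 →
      ⟪gradient (G i) xb, d⟫ * ⟪gradient (H i) xb, d⟫ ≤ 0)}

/-- The weak stationarity system of the MPVC for given multipliers. -/
def MpvcWeakMult (f : Rn n → ℝ) (g : Fin l → Rn n → ℝ) (h : Fin m → Rn n → ℝ)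
    (G H : Fin p → Rn n → ℝ) (xb : Rn n)
    (lam : Fin l → ℝ) (eta : Fin m → ℝ) (mu nu : Fin p → ℝ) : Prop :=
  gradient f xb + ∑ i, lam i • gradient (g i) xb + ∑ i, eta i • gradient (h i) xb
    + ∑ i, mu i • gradient (G i) xb - ∑ i, nu i • gradient (H i) xb = 0 ∧
  (∀ i, g i xb = 0 → 0 ≤ lam i) ∧ (∀ i, g i xb ≠ 0 → lam i = 0) ∧
  (∀ i, (0 < G i xb ∧ H i xb = 0) ∨ (G i xb < 0 ∧ H i xb = 0) ∨
    (G i xb < 0 ∧ 0 < H i xb) → mu i = 0) ∧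
  (∀ i, (G i xb = 0 ∧ 0 < H i xb) ∨ (G i xb = 0 ∧ H i xb = 0) → 0 ≤ mu i) ∧
  (∀ i, (G i xb = 0 ∧ 0 < H i xb) ∨ (G i xb < 0 ∧ 0 < H i xb) → nu i = 0) ∧
  (∀ i, G i xb < 0 → H i xb = 0 → 0 ≤ nu i)

/-- A_α-stationarity for the MPVC. -/
def MpvcAStat (f : Rn n → ℝ) (g : Fin l → Rn n → ℝ) (h : Fin m → Rn n → ℝ)
    (G H : Fin p → Rn n → ℝ) (xb : Rn n) (α : Fin p → ℝ) : Prop :=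
  ∃ lam eta mu nu, MpvcWeakMult f g h G H xb lam eta mu nu ∧
    (∀ i, G i xb = 0 → H i xb = 0 → α i = 0 → mu i = 0) ∧
    (∀ i, G i xb = 0 → H i xb = 0 → α i = 1 → 0 ≤ nu i)

/-- P_α-stationarity for the MPVC. -/
def MpvcPStat (f : Rn n → ℝ) (g : Fin l → Rn n → ℝ) (h : Fin m → Rn n → ℝ)
    (G H : Fin p → Rn n → ℝ) (xb : Rn n) (α : Fin p → ℝ) : Prop :=
  ∃ lam eta mu nu, MpvcWeakMult f g h G H xb lam eta mu nu ∧
    (∀ i, G i xb = 0 → H i xb = 0 → α i = 0 → mu i = 0) ∧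
    (∀ i, G i xb = 0 → H i xb = 0 → α i = 1 →
      (mu i = 0 ∧ 0 ≤ nu i) ∨ nu i = 0)

/-- C_d-stationarity for the MPVC. -/
def MpvcCStat (f : Rn n → ℝ) (g : Fin l → Rn n → ℝ) (h : Fin m → Rn n → ℝ)
    (G H : Fin p → Rn n → ℝ) (xb : Rn n) (d : Fin p → ℝ) : Prop :=
  ∃ lam eta mu nu, MpvcWeakMult f g h G H xb lam eta mu nu ∧
    (∀ i, G i xb = 0 → H i xb = 0 →
      (mu i = 0 ∧ 0 ≤ nu i) ∨ (1 - d i) * mu i = -(d i * nu i))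

/-- M-stationarity for the MPVC. -/
def MpvcMStat (f : Rn n → ℝ) (g : Fin l → Rn n → ℝ) (h : Fin m → Rn n → ℝ)
    (G H : Fin p → Rn n → ℝ) (xb : Rn n) : Prop :=
  ∃ lam eta mu nu, MpvcWeakMult f g h G H xb lam eta mu nu ∧
    (∀ i, G i xb = 0 → H i xb = 0 → mu i * nu i = 0)

/-- The feasible set of the branch problem NLP(0) associated with xb. -/
def MpvcNlp0Feasible (g : Fin l → Rn n → ℝ) (h : Fin m → Rn n → ℝ)
    (G H : Fin p → Rn n → ℝ) (xb : Rn n) : Set (Rn n) :=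
  {x | (∀ i, g i x ≤ 0) ∧ (∀ i, h i x = 0) ∧
    (∀ i, (0 < G i xb ∧ H i xb = 0) ∨ (G i xb = 0 ∧ H i xb = 0) → H i x = 0) ∧
    (∀ i, (G i xb < 0 ∧ H i xb = 0) ∨ (G i xb < 0 ∧ 0 < H i xb) ∨
      (G i xb = 0 ∧ 0 < H i xb) → G i x ≤ 0 ∧ 0 ≤ H i x)}

/-- The standard linearization cone of NLP(0) at xb. -/
def MpvcNlp0LinCone (g : Fin l → Rn n → ℝ) (h : Fin m → Rn n → ℝ)
    (G H : Fin p → Rn n → ℝ) (xb : Rn n) : Set (Rn n) :=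
  {d | (∀ i, g i xb = 0 → ⟪gradient (g i) xb, d⟫ ≤ 0) ∧
    (∀ i, ⟪gradient (h i) xb, d⟫ = 0) ∧
    (∀ i, (0 < G i xb ∧ H i xb = 0) ∨ (G i xb = 0 ∧ H i xb = 0) →
      ⟪gradient (H i) xb, d⟫ = 0) ∧
    (∀ i, G i xb = 0 → 0 < H i xb → ⟪gradient (G i) xb, d⟫ ≤ 0) ∧
    (∀ i, G i xb < 0 → H i xb = 0 → 0 ≤ ⟪gradient (H i) xb, d⟫)}

/-! ### Kuhn's lemma through mod 2 cubical cup products -/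

/-- The cup product mod 2 of the coboundaries of the labels `lab a`, `a ∈ L`, evaluated on the cube
with lowest vertex `x` spanned by the directions in `I`. It is meant for `I.card = L.length`; for
other `I` the recursion still makes sense and no lemma below has to exclude them. -/
def cupProd {p : ℕ} (lab : Fin p → (Fin p → ℕ) → ZMod 2) :
    List (Fin p) → (Fin p → ℕ) → Finset (Fin p) → ZMod 2
  | [], _, _ => 1
  | a :: L, x, I => ∑ i ∈ I, (lab a (x + Pi.single i 1) + lab a x) *
      cupProd lab L (x + Pi.single i 1) (I.erase i)

/-- In characteristic two the off-diagonal terms of a symmetric double sum cancel in pairs. -/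
theorem sum_symm_eq_zero {ι : Type*} [DecidableEq ι] (J : Finset ι) (T : ι → ι → ZMod 2)
    (hT : ∀ i j, T i j = T j i) : ∑ i ∈ J, ∑ j ∈ J.erase i, T i j = 0 := by
  induction J using Finset.induction_on with
  | empty => simp
  | insert a J ha ih =>
    rw [Finset.sum_insert ha, Finset.erase_insert ha]
    have : ∀ i ∈ J, ∑ j ∈ (insert a J).erase i, T i j = T i a + ∑ j ∈ J.erase i, T i j := by
      intro i hi
      have hne : a ≠ i := fun h => ha (h ▸ hi)
      rw [Finset.erase_insert_of_ne hne, Finset.sum_insert]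
      simp [ha]
    rw [Finset.sum_congr rfl this, Finset.sum_add_distrib, ih, add_zero,
      Finset.sum_congr rfl (fun i _ => hT i a)]
    exact CharTwo.add_self_eq_zero _

theorem sum_erase_comm {ι : Type*} [DecidableEq ι] (J : Finset ι) (T : ι → ι → ZMod 2) :
    ∑ i ∈ J, ∑ j ∈ J.erase i, T i j = ∑ i ∈ J, ∑ j ∈ J.erase i, T j i := by
  apply Finset.sum_comm'
  intro x y
  simp only [Finset.mem_erase]
  tauto

/-- The cup product is a closed cochain: over the boundary of the cube `(x, J)`, the upper
faces and the lower faces have equal sums. -/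
theorem cupProd_closed {p : ℕ} (lab : Fin p → (Fin p → ℕ) → ZMod 2) (L : List (Fin p)) :
    ∀ (x : Fin p → ℕ) (J : Finset (Fin p)),
      ∑ i ∈ J, cupProd lab L (x + Pi.single i 1) (J.erase i) =
        ∑ i ∈ J, cupProd lab L x (J.erase i) := by
  induction L with
  | nil => intro x J; rfl
  | cons a L ih =>
    intro x J
    set V := cupProd lab L with hV
    let e : Fin p → Fin p → ℕ := fun i => Pi.single i 1
    -- the terms with the label at `x + e i + e j` are symmetric in `i` and `j`
    have h1 : ∑ i ∈ J, cupProd lab (a :: L) (x + e i) (J.erase i) =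
        ∑ i ∈ J, ∑ j ∈ J.erase i, lab a (x + e i) * V (x + e i + e j) ((J.erase i).erase j) := by
      have := sum_symm_eq_zero J (fun i j =>
        lab a (x + e i + e j) * V (x + e i + e j) ((J.erase i).erase j)) (by
          intro i j
          simp only [add_right_comm x (e i) (e j), Finset.erase_right_comm (a := i) (b := j)])
      rw [← zero_add (∑ i ∈ J, ∑ j ∈ J.erase i, _), ← this, ← Finset.sum_add_distrib]
      refine Finset.sum_congr rfl fun i _ => ?_
      rw [← Finset.sum_add_distrib]
      exact Finset.sum_congr rfl fun j _ => add_mul _ _ _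
    have h2 : ∑ i ∈ J, cupProd lab (a :: L) x (J.erase i) =
        (∑ i ∈ J, ∑ j ∈ J.erase i, lab a (x + e j) * V (x + e j) ((J.erase i).erase j)) +
        ∑ i ∈ J, ∑ j ∈ J.erase i, lab a x * V (x + e j) ((J.erase i).erase j) := by
      rw [← Finset.sum_add_distrib]
      refine Finset.sum_congr rfl fun i _ => ?_
      rw [← Finset.sum_add_distrib]
      exact Finset.sum_congr rfl fun j _ => add_mul _ _ _
    have h3 : ∑ i ∈ J, ∑ j ∈ J.erase i, lab a x * V (x + e j) ((J.erase i).erase j) = 0 := by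
      rw [← sum_symm_eq_zero J (fun i j => lab a x * V x ((J.erase i).erase j)) (by
          intro i j
          simp only [Finset.erase_right_comm (a := i) (b := j)])]
      refine Finset.sum_congr rfl fun i _ => ?_
      rw [← Finset.mul_sum, ← Finset.mul_sum, ih x (J.erase i)]
    have h4 : ∑ i ∈ J, ∑ j ∈ J.erase i,
          lab a (x + e i) * V (x + e i + e j) ((J.erase i).erase j) =
        ∑ i ∈ J, ∑ j ∈ J.erase i, lab a (x + e j) * V (x + e j) ((J.erase i).erase j) := by
      rw [sum_erase_comm J (fun i j => lab a (x + e j) * V (x + e j) ((J.erase i).erase j))]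
      refine Finset.sum_congr rfl fun i _ => ?_
      rw [← Finset.mul_sum, ih (x + e i) (J.erase i), Finset.mul_sum]
      refine Finset.sum_congr rfl fun j _ => ?_
      rw [Finset.erase_right_comm]
    rw [h2, h3, add_zero, ← h4]
    exact h1

/-- The cup product vanishes on cubes contained in a hyperplane `x j = k` on which one of its
labels is constant. -/
theorem cupProd_eq_zero {p : ℕ} (lab : Fin p → (Fin p → ℕ) → ZMod 2) (L : List (Fin p))
    (j : Fin p) (hj : j ∈ L) (k : ℕ) (c : ZMod 2) (hc : ∀ z : Fin p → ℕ, z j = k → lab j z = c) :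
    ∀ (x : Fin p → ℕ) (I : Finset (Fin p)), x j = k → j ∉ I → cupProd lab L x I = 0 := by
  induction L with
  | nil => simp at hj
  | cons a L ih =>
    intro x I hx hI
    refine Finset.sum_eq_zero fun i hi => ?_
    have hij : j ≠ i := fun h => hI (h ▸ hi)
    have hxj : (x + Pi.single i 1 : Fin p → ℕ) j = k := by simp [hx, hij]
    rcases List.mem_cons.1 hj with rfl | hj
    · rw [hc _ hxj, hc _ hx, CharTwo.add_self_eq_zero, zero_mul]
    · rw [ih hj _ _ hxj (fun h => hI (Finset.mem_of_mem_erase h)), mul_zero]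

/-- Where the cup product is nonzero, every label involved takes two values on the cube. -/
theorem cupProd_ne_zero {p : ℕ} (lab : Fin p → (Fin p → ℕ) → ZMod 2) (L : List (Fin p)) :
    ∀ (x : Fin p → ℕ) (I : Finset (Fin p)), cupProd lab L x I ≠ 0 → ∀ j ∈ L,
      ∃ u v : Fin p → ℕ, (∀ k, x k ≤ u k ∧ u k ≤ x k + if k ∈ I then 1 else 0) ∧
        (∀ k, x k ≤ v k ∧ v k ≤ x k + if k ∈ I then 1 else 0) ∧ lab j u ≠ lab j v := by
  induction L with
  | nil => simp
  | cons a L ih =>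
    intro x I hne j hj
    obtain ⟨i, hi, hi'⟩ := Finset.exists_ne_zero_of_sum_ne_zero hne
    have hstep : ∀ k, (x + Pi.single i 1 : Fin p → ℕ) k = x k + if k = i then 1 else 0 := by
      intro k; simp [Pi.single_apply]
    rcases List.mem_cons.1 hj with rfl | hj
    · refine ⟨x + Pi.single i 1, x, fun k => ?_, fun k => ⟨le_rfl, by simp⟩, fun h => ?_⟩
      · rw [hstep]; by_cases h : k = i <;> simp [h, hi]
      · apply left_ne_zero_of_mul hi'
        rw [h, CharTwo.add_self_eq_zero]
    · obtain ⟨u, v, hu, hv, huv⟩ := ih _ _ (right_ne_zero_of_mul hi') j hj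
      have key : ∀ w : Fin p → ℕ, (∀ k, (x + Pi.single i 1 : Fin p → ℕ) k ≤ w k ∧
          w k ≤ (x + Pi.single i 1 : Fin p → ℕ) k + if k ∈ I.erase i then 1 else 0) →
          ∀ k, x k ≤ w k ∧ w k ≤ x k + if k ∈ I then 1 else 0 := by
        intro w hw k
        have := hw k
        rw [hstep] at this
        by_cases h : k = i
        · subst h; simpa [hi] using And.intro (by simp at this; omega) this.2
        · simpa [h] using this
      exact ⟨u, v, key u hu, key v hv, huv⟩

/-- The grid points with coordinates in `{0, …, N - 1}` in the directions of `I`, and with the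
coordinates of `y` elsewhere: the lowest vertices of the cells of an `I`-dimensional face. -/
def gridBox {p : ℕ} (N : ℕ) (I : Finset (Fin p)) (y : Fin p → ℕ) : Finset (Fin p → ℕ) :=
  Fintype.piFinset fun i => if i ∈ I then Finset.range N else {y i}

theorem mem_gridBox {p : ℕ} {N : ℕ} {I : Finset (Fin p)} {y x : Fin p → ℕ} :
    x ∈ gridBox N I y ↔ ∀ i, if i ∈ I then x i < N else x i = y i := by
  unfold gridBox
  rw [Fintype.mem_piFinset]
  refine forall_congr' fun i => ?_
  split_ifs <;> simp

theorem sum_gridBox_slice {p : ℕ} (N : ℕ) (I : Finset (Fin p)) (y : Fin p → ℕ) (i : Fin p)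
    (hi : i ∈ I) (F : (Fin p → ℕ) → ZMod 2) :
    ∑ x ∈ gridBox N I y, F x =
      ∑ t ∈ Finset.range N, ∑ x ∈ gridBox N (I.erase i) (Function.update y i t), F x := by
  rw [← Finset.sum_fiberwise_of_maps_to (s := gridBox N I y) (t := Finset.range N)
    (g := fun x => x i)]
  · refine Finset.sum_congr rfl fun t ht => Finset.sum_congr ?_ fun _ _ => rfl
    ext x
    rw [Finset.mem_filter, mem_gridBox, mem_gridBox]
    constructor
    · rintro ⟨h, rfl⟩ k
      by_cases hk : k = i
      · subst hk; simp
      · simpa [hk] using h k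
    · intro h
      have hxi : x i = t := by simpa using h i
      refine ⟨fun k => ?_, hxi⟩
      by_cases hk : k = i
      · subst hk; simpa [hi, hxi] using ht
      · simpa [hk] using h k
  · intro x hx
    simpa [hi] using mem_gridBox.1 hx i

/-- Discrete Stokes in one direction: mod 2, the increments of `U` along direction `i` sum up to
the values of `U` on the two faces orthogonal to `i`. -/
theorem sum_gridBox_telescope {p : ℕ} (N : ℕ) (I : Finset (Fin p)) (y : Fin p → ℕ) (i : Fin p)
    (hi : i ∈ I) (U : (Fin p → ℕ) → ZMod 2) :
    ∑ x ∈ gridBox N I y, (U (x + Pi.single i 1) + U x) =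
      ∑ x ∈ gridBox N (I.erase i) (Function.update y i N), U x +
        ∑ x ∈ gridBox N (I.erase i) (Function.update y i 0), U x := by
  rw [sum_gridBox_slice N I y i hi]
  set A : ℕ → ZMod 2 := fun t => ∑ x ∈ gridBox N (I.erase i) (Function.update y i t), U x with hA
  have hshift : ∀ t, ∑ x ∈ gridBox N (I.erase i) (Function.update y i t), U (x + Pi.single i 1)
      = A (t + 1) := by
    intro t
    refine Finset.sum_bij' (fun x _ => x + Pi.single i 1) (fun x _ => x - Pi.single i 1)
      ?_ ?_ ?_ ?_ ?_
    · intro x hx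
      rw [mem_gridBox] at hx ⊢
      intro k
      by_cases hk : k = i
      · subst hk; simpa using hx k
      · simpa [hk] using hx k
    · intro x hx
      rw [mem_gridBox] at hx ⊢
      intro k
      by_cases hk : k = i
      · subst hk
        have := hx k
        simp at this
        simp [this]
      · simpa [hk] using hx k
    · intro x hx; simp
    · intro x hx
      have hxi : x i = t + 1 := by simpa using mem_gridBox.1 hx i
      ext k
      by_cases hk : k = i
      · subst hk; simp [hxi]
      · simp [hk]
    · intro x hx; rfl
  have : ∀ t ∈ Finset.range N, ∑ x ∈ gridBox N (I.erase i) (Function.update y i t),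
      (U (x + Pi.single i 1) + U x) = A (t + 1) - A t := by
    intro t _
    rw [Finset.sum_add_distrib, hshift, CharTwo.sub_eq_add]
  rw [Finset.sum_congr rfl this, Finset.sum_range_sub, CharTwo.sub_eq_add]

/-- On the face spanned by `L`, the cup product sums to `1`. Moving the first label out turns the
sum into a boundary sum. The faces orthogonal to another direction `i` contribute nothing because
`lab i` is constant there, the face `x a = 0` contributes nothing because `lab a = 0` there, and the
face `x a = N` gives the same sum for the remaining labels. -/
theorem sum_cupProd_eq_one {p : ℕ} (N : ℕ) (lab : Fin p → (Fin p → ℕ) → ZMod 2)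
    (h0 : ∀ j x, x j = 0 → lab j x = 0) (h1 : ∀ j x, x j = N → lab j x = 1)
    (L : List (Fin p)) : L.Nodup → ∀ y : Fin p → ℕ,
      ∑ x ∈ gridBox N L.toFinset y, cupProd lab L x L.toFinset = 1 := by
  induction L with
  | nil =>
    intro _ y
    have : gridBox N (∅ : Finset (Fin p)) y = {y} := by
      ext x
      rw [mem_gridBox]
      simp [funext_iff]
    simp [this, cupProd]
  | cons a L ih =>
    intro hnd y
    obtain ⟨haL, hnd⟩ := List.nodup_cons.1 hnd
    set I := (a :: L).toFinset with hI
    have haI : a ∈ I := by simp [hI]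
    have hIa : I.erase a = L.toFinset := by
      rw [hI, List.toFinset_cons, Finset.erase_insert (by simpa using haL)]
    let U : Fin p → (Fin p → ℕ) → ZMod 2 := fun i x => lab a x * cupProd lab L x (I.erase i)
    have hW : ∀ x, cupProd lab (a :: L) x I = ∑ i ∈ I, (U i (x + Pi.single i 1) + U i x) := by
      intro x
      rw [Finset.sum_add_distrib, ← Finset.mul_sum, ← cupProd_closed, Finset.mul_sum,
        ← Finset.sum_add_distrib]
      exact Finset.sum_congr rfl fun i _ => add_mul _ _ _
    rw [Finset.sum_congr rfl fun x _ => hW x, Finset.sum_comm, Finset.sum_eq_single_of_mem a haI]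
    · rw [sum_gridBox_telescope N I y a haI, hIa, ← ih hnd (Function.update y a N)]
      have hz : ∑ x ∈ gridBox N L.toFinset (Function.update y a 0), U a x = 0 := by
        refine Finset.sum_eq_zero fun x hx => ?_
        have hxa : x a = 0 := by simpa [haL] using mem_gridBox.1 hx a
        simp [U, h0 a x hxa]
      rw [hz, add_zero]
      refine Finset.sum_congr rfl fun x hx => ?_
      have hxa : x a = N := by simpa [haL] using mem_gridBox.1 hx a
      simp [U, h1 a x hxa, hIa]
    · intro i hi hia
      rw [sum_gridBox_telescope N I y i hi]
      have hiL : i ∈ L := by simpa [hI, hia] using hi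
      have hz : ∀ (t : ℕ) (c : ZMod 2), (∀ z : Fin p → ℕ, z i = t → lab i z = c) →
          ∑ x ∈ gridBox N (I.erase i) (Function.update y i t), U i x = 0 := by
        intro t c hc
        refine Finset.sum_eq_zero fun x hx => ?_
        have hxi : x i = t := by simpa using mem_gridBox.1 hx i
        simp only [U]
        rw [cupProd_eq_zero lab L i hiL t c hc x _ hxi (Finset.notMem_erase i I), mul_zero]
      rw [hz N 1 (h1 i), hz 0 0 (h0 i), add_zero]

/-- Kuhn's cubical form of Sperner's lemma. -/
theorem kuhn_lemma {p : ℕ} (N : ℕ) (lab : Fin p → (Fin p → ℕ) → ZMod 2)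
    (h0 : ∀ j x, x j = 0 → lab j x = 0) (h1 : ∀ j x, x j = N → lab j x = 1) :
    ∃ x : Fin p → ℕ, (∀ k, x k < N) ∧ ∀ j, ∃ u v : Fin p → ℕ,
      (∀ k, x k ≤ u k ∧ u k ≤ x k + 1) ∧ (∀ k, x k ≤ v k ∧ v k ≤ x k + 1) ∧
        lab j u = 0 ∧ lab j v = 1 := by
  have hS := sum_cupProd_eq_one N lab h0 h1 (List.finRange p) (List.nodup_finRange p) 0
  obtain ⟨x, hx, hne⟩ := Finset.exists_ne_zero_of_sum_ne_zero (hS.trans_ne one_ne_zero)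
  refine ⟨x, fun k => by simpa using mem_gridBox.1 hx k, fun j => ?_⟩
  obtain ⟨u, v, hu, hv, huv⟩ := cupProd_ne_zero lab _ _ _ hne j (List.mem_finRange j)
  have hu' : ∀ k, x k ≤ u k ∧ u k ≤ x k + 1 := fun k => by simpa using hu k
  have hv' : ∀ k, x k ≤ v k ∧ v k ≤ x k + 1 := fun k => by simpa using hv k
  have hcase : ∀ a b : ZMod 2, a ≠ b → (a = 0 ∧ b = 1) ∨ (b = 0 ∧ a = 1) := by decide
  rcases hcase _ _ huv with h | h
  · exact ⟨u, v, hu', hv', h⟩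
  · exact ⟨v, u, hv', hu', h⟩

/-! ### The Poincaré–Miranda theorem -/

theorem poincare_miranda {p : ℕ} (F : Fin p → (Fin p → ℝ) → ℝ) (hF : ∀ i, Continuous (F i))
    (h0 : ∀ i x, (∀ k, x k ∈ Icc (0 : ℝ) 1) → x i = 0 → F i x ≤ 0)
    (h1 : ∀ i x, (∀ k, x k ∈ Icc (0 : ℝ) 1) → x i = 1 → 0 ≤ F i x) :
    ∃ x : Fin p → ℝ, (∀ k, x k ∈ Icc (0 : ℝ) 1) ∧ ∀ i, F i x = 0 := by
  classical
  have step : ∀ n : ℕ, ∃ x : Fin p → ℝ, x ∈ Icc (0 : Fin p → ℝ) 1 ∧ ∀ j, ∃ u v : Fin p → ℝ,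
      dist u x ≤ 1 / ((n : ℝ) + 1) ∧ dist v x ≤ 1 / ((n : ℝ) + 1) ∧ F j u ≤ 0 ∧ 0 ≤ F j v := by
    intro n
    set N := n + 1 with hN
    have hNpos : (0 : ℝ) < (n : ℝ) + 1 := by positivity
    let pt : (Fin p → ℕ) → Fin p → ℝ := fun x k => (x k : ℝ) / ((n : ℝ) + 1)
    have hpt : ∀ x : Fin p → ℕ, (∀ k, x k ≤ N) → ∀ k, pt x k ∈ Icc (0 : ℝ) 1 := by
      intro x hx k
      refine ⟨by positivity, ?_⟩
      rw [div_le_one hNpos]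
      exact_mod_cast hx k
    -- label `0` certifies `F j ≤ 0` and label `1` certifies `0 ≤ F j`, also on the boundary faces
    let lab : Fin p → (Fin p → ℕ) → ZMod 2 := fun j x =>
      if x j = 0 ∨ (x j ≠ N ∧ F j (pt x) ≤ 0) then 0 else 1
    obtain ⟨x, hxN, hx⟩ := kuhn_lemma N lab (fun j x hj => by simp [lab, hj])
      (fun j x hj => by simp [lab, hj, hN])
    have hclose : ∀ u : Fin p → ℕ, (∀ k, x k ≤ u k ∧ u k ≤ x k + 1) →
        dist (pt u) (pt x) ≤ 1 / ((n : ℝ) + 1) := by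
      intro u hu
      rw [dist_pi_le_iff (by positivity)]
      intro k
      have h1 : (x k : ℝ) ≤ u k := by exact_mod_cast (hu k).1
      have h2 : (u k : ℝ) ≤ x k + 1 := by exact_mod_cast (hu k).2
      rw [Real.dist_eq, ← sub_div, abs_of_nonneg (div_nonneg (by linarith) hNpos.le)]
      gcongr
      linarith
    refine ⟨pt x, ?_, fun j => ?_⟩
    · have := hpt x (fun k => (hxN k).le)
      exact ⟨fun k => (this k).1, fun k => (this k).2⟩
    · obtain ⟨u, v, hu, hv, hlu, hlv⟩ := hx j
      have huc := hpt u fun k => (hu k).2.trans (hxN k)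
      have hvc := hpt v fun k => (hv k).2.trans (hxN k)
      refine ⟨pt u, pt v, hclose u hu, hclose v hv, ?_, ?_⟩
      · by_cases h : u j = 0 ∨ (u j ≠ N ∧ F j (pt u) ≤ 0)
        · rcases h with h | h
          · exact h0 j _ huc (by simp [pt, h])
          · exact h.2
        · simp [lab, h] at hlu
      · by_cases h : v j = 0 ∨ (v j ≠ N ∧ F j (pt v) ≤ 0)
        · simp [lab, h] at hlv
        · by_cases hvN : v j = N
          · refine h1 j _ hvc ?_
            simp only [pt, hvN, hN]
            push_cast
            exact div_self hNpos.ne'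
          · by_contra hneg
            exact h (Or.inr ⟨hvN, (not_le.1 hneg).le⟩)
  choose x hx u v hu hv hFu hFv using step
  obtain ⟨a, ha, φ, hφ, hlim⟩ := (isCompact_Icc (a := (0 : Fin p → ℝ)) (b := 1)).tendsto_subseq hx
  have hnear : ∀ w : ℕ → Fin p → ℝ, (∀ n, dist (w n) (x n) ≤ 1 / ((n : ℝ) + 1)) →
      Tendsto (w ∘ φ) atTop (nhds a) := by
    intro w hw
    refine tendsto_of_tendsto_of_dist hlim ?_
    refine squeeze_zero (fun _ => dist_nonneg) (fun n => ?_)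
      (tendsto_one_div_add_atTop_nhds_zero_nat.comp hφ.tendsto_atTop)
    rw [dist_comm]
    exact hw (φ n)
  refine ⟨a, fun k => ⟨ha.1 k, ha.2 k⟩, fun i => le_antisymm ?_ ?_⟩
  · exact le_of_tendsto' (((hF i).tendsto a).comp (hnear (fun n => u n i) fun n => hu n i))
      fun n => hFu (φ n) i
  · exact ge_of_tendsto' (((hF i).tendsto a).comp (hnear (fun n => v n i) fun n => hv n i))
      fun n => hFv (φ n) i

/-! ### Farkas' lemma and the branch multipliers -/

/-- Farkas' lemma for finitely many vectors, by induction on their number. If the new constraint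
`a k` is needed, there is `x` violating the conclusion with `⟪a k, x⟫ > 0` but satisfying the other
constraints; projecting along `x` onto the orthogonal complement of `a k` removes `a k`. -/
theorem farkas {E ι : Type*} [NormedAddCommGroup E] [InnerProductSpace ℝ E] (s : Finset ι) :
    ∀ (a : ι → E) (b : E), (∀ d : E, (∀ i ∈ s, ⟪a i, d⟫ ≤ 0) → ⟪b, d⟫ ≤ 0) →
      ∃ c : ι → ℝ, (∀ i, 0 ≤ c i) ∧ b = ∑ i ∈ s, c i • a i := by
  classical
  induction s using Finset.induction_on with
  | empty =>
    intro a b hb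
    refine ⟨0, fun _ => le_rfl, ?_⟩
    have := hb b (by simp)
    simpa using inner_self_eq_zero.1 (le_antisymm this real_inner_self_nonneg)
  | insert k s hk ih =>
    intro a b hb
    by_cases hall : ∀ d : E, (∀ i ∈ s, ⟪a i, d⟫ ≤ 0) → ⟪b, d⟫ ≤ 0
    · obtain ⟨c, hc, hbc⟩ := ih a b hall
      refine ⟨Function.update c k 0, fun i => ?_, ?_⟩
      · by_cases h : i = k
        · subst h; simp
        · simpa [h] using hc i
      · rw [Finset.sum_insert hk, hbc]
        simp only [Function.update_self, zero_smul, zero_add]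
        refine Finset.sum_congr rfl fun i hi => ?_
        rw [Function.update_of_ne (ne_of_mem_of_not_mem hi hk)]
    · push Not at hall
      obtain ⟨x, hx, hbx⟩ := hall
      have hkx : 0 < ⟪a k, x⟫ := by
        by_contra h
        refine absurd (hb x fun i hi => ?_) (not_le.2 hbx)
        rcases Finset.mem_insert.1 hi with rfl | hi
        · exact not_lt.1 h
        · exact hx i hi
      set r := ⟪a k, x⟫ with hr
      obtain ⟨c, hc, hbc⟩ := ih (fun i => a i - (⟪a i, x⟫ / r) • a k)
        (b - (⟪b, x⟫ / r) • a k) (by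
          intro d hd
          have hproj : ∀ w : E, ⟪w - (⟪w, x⟫ / r) • a k, d⟫ = ⟪w, d - (⟪a k, d⟫ / r) • x⟫ := by
            intro w
            simp only [inner_sub_left, inner_sub_right, real_inner_smul_left,
              real_inner_smul_right]
            ring
          rw [hproj]
          refine hb _ fun i hi => ?_
          rcases Finset.mem_insert.1 hi with rfl | hi
          · rw [inner_sub_right, real_inner_smul_right, ← hr, div_mul_cancel₀ _ hkx.ne', sub_self]
          · rw [← hproj]
            exact hd i hi)
      refine ⟨Function.update c k (⟪b, x⟫ / r - ∑ i ∈ s, c i * (⟪a i, x⟫ / r)), fun i => ?_, ?_⟩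
      · by_cases h : i = k
        · subst h
          rw [Function.update_self, sub_nonneg]
          refine le_trans (Finset.sum_nonpos fun i hi => ?_) (div_nonneg hbx.le hkx.le)
          exact mul_nonpos_of_nonneg_of_nonpos (hc i)
            (div_nonpos_of_nonpos_of_nonneg (hx i hi) hkx.le)
        · simpa [h] using hc i
      · rw [Finset.sum_insert hk, Function.update_self]
        have hs : ∑ i ∈ s, Function.update c k
            (⟪b, x⟫ / r - ∑ i ∈ s, c i * (⟪a i, x⟫ / r)) i • a i = ∑ i ∈ s, c i • a i := by
          refine Finset.sum_congr rfl fun i hi => ?_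
          rw [Function.update_of_ne (ne_of_mem_of_not_mem hi hk)]
        rw [hs]
        simp only [smul_sub, Finset.sum_sub_distrib, smul_smul] at hbc
        refine (eq_add_of_sub_eq hbc).trans ?_
        rw [sub_smul, Finset.sum_smul]
        abel

theorem neg_gradient_mem_polarCone {n : ℕ} {f : Rn n → ℝ} {S : Set (Rn n)} {xb : Rn n}
    (hf : Differentiable ℝ f) (hmin : IsLocalMinOn f S xb) :
    -gradient f xb ∈ polarCone (tangentCone' S xb) := by
  rintro d ⟨xk, tk, hxS, htpos, hx, ht, hd⟩
  have hmem : d ∈ posTangentConeAt S xb := by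
    refine mem_tangentConeAt_of_seq atTop (fun k => (⟨(tk k)⁻¹, (inv_pos.2 (htpos k)).le⟩ : NNReal))
      (fun k => xk k - xb) ?_ ?_ ?_
    · simpa using hx.sub_const xb
    · exact Eventually.of_forall fun k => by simpa using hxS k
    · exact hd
  have := hmin.hasFDerivWithinAt_nonneg (hf xb).hasFDerivAt.hasFDerivWithinAt hmem
  rw [inner_neg_left, inner_gradient_left]
  linarith

/-- Farkas' lemma applied to the piece of the linearized cone indexed by `β`. -/
theorem branch_AStat {n l m p : ℕ} (f : Rn n → ℝ) (g : Fin l → Rn n → ℝ)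
    (h : Fin m → Rn n → ℝ) (G H : Fin p → Rn n → ℝ) (xb : Rn n)
    (hpol : -gradient f xb ∈ polarCone (MpvcLinCone g h G H xb)) (β : Finset (Fin p)) :
    MpvcAStat f g h G H xb (fun i => if i ∈ β then 1 else 0) := by
  classical
  -- `PG`: `∇Gᵀd ≤ 0` is imposed; `PH`: `∇Hᵀd ≥ 0` is imposed; `QH`: also `∇Hᵀd ≤ 0` is imposed
  let PG : Fin p → Prop := fun i => G i xb = 0 ∧ (0 < H i xb ∨ (H i xb = 0 ∧ i ∈ β))
  let PH : Fin p → Prop := fun i => H i xb = 0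
  let QH : Fin p → Prop := fun i => H i xb = 0 ∧ (0 < G i xb ∨ (G i xb = 0 ∧ i ∉ β))
  let A : Fin l ⊕ Fin m ⊕ Fin m ⊕ Fin p ⊕ Fin p ⊕ Fin p → Rn n :=
    Sum.elim (fun i => if g i xb = 0 then gradient (g i) xb else 0) <|
    Sum.elim (fun i => gradient (h i) xb) <| Sum.elim (fun i => -gradient (h i) xb) <|
    Sum.elim (fun i => if PG i then gradient (G i) xb else 0) <|
    Sum.elim (fun i => if PH i then -gradient (H i) xb else 0)
      (fun i => if QH i then gradient (H i) xb else 0)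
  obtain ⟨c, hc, hsum⟩ := farkas Finset.univ A (-gradient f xb) (by
    intro d hd
    refine hpol d ?_
    have hdg : ∀ i, g i xb = 0 → ⟪gradient (g i) xb, d⟫ ≤ 0 := fun i hi => by
      simpa [A, hi] using hd (.inl i) (Finset.mem_univ _)
    have hdh : ∀ i, ⟪gradient (h i) xb, d⟫ = 0 := fun i => le_antisymm
      (by simpa [A] using hd (.inr (.inl i)) (Finset.mem_univ _))
      (by simpa [A] using hd (.inr (.inr (.inl i))) (Finset.mem_univ _))
    have hdG : ∀ i, PG i → ⟪gradient (G i) xb, d⟫ ≤ 0 := fun i hi => by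
      have := hd (.inr (.inr (.inr (.inl i)))) (Finset.mem_univ _)
      simp only [A, Sum.elim_inr, Sum.elim_inl, if_pos hi] at this
      exact this
    have hdH : ∀ i, PH i → 0 ≤ ⟪gradient (H i) xb, d⟫ := fun i hi => by
      have := hd (.inr (.inr (.inr (.inr (.inl i))))) (Finset.mem_univ _)
      simp only [A, Sum.elim_inr, Sum.elim_inl, if_pos hi, inner_neg_left] at this
      linarith
    have hdH' : ∀ i, QH i → ⟪gradient (H i) xb, d⟫ ≤ 0 := fun i hi => by
      have := hd (.inr (.inr (.inr (.inr (.inr i))))) (Finset.mem_univ _)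
      simp only [A, Sum.elim_inr, if_pos hi] at this
      exact this
    refine ⟨hdg, hdh, fun i h1 h2 => hdG i ⟨h1, Or.inl h2⟩, fun i h1 h2 =>
      le_antisymm (hdH' i ⟨h2, Or.inl h1⟩) (hdH i h2), ?_, fun i h1 h2 => ?_⟩
    · rintro i (⟨_, hi⟩ | ⟨_, hi⟩) <;> exact hdH i hi
    · by_cases hi : i ∈ β
      · exact mul_nonpos_of_nonpos_of_nonneg (hdG i ⟨h1, Or.inr ⟨h2, hi⟩⟩) (hdH i h2)
      · rw [le_antisymm (hdH' i ⟨h2, Or.inr ⟨h1, hi⟩⟩) (hdH i h2), mul_zero])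
  simp only [Fintype.sum_sum_type, A, Sum.elim_inl, Sum.elim_inr, smul_ite, smul_zero,
    smul_neg] at hsum
  refine ⟨fun i => if g i xb = 0 then c (.inl i) else 0,
    fun i => c (.inr (.inl i)) - c (.inr (.inr (.inl i))),
    fun i => if PG i then c (.inr (.inr (.inr (.inl i)))) else 0,
    fun i => (if PH i then c (.inr (.inr (.inr (.inr (.inl i))))) else 0) -
      (if QH i then c (.inr (.inr (.inr (.inr (.inr i))))) else 0),
    ⟨?_, ?_, ?_, ?_, ?_, ?_, ?_⟩, ?_, ?_⟩
  · have hf : gradient f xb = -(-gradient f xb) := (neg_neg _).symm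
    have hneg : ∀ (P : Prop) [Decidable P] (v : Rn n),
        (if P then -v else 0) = -(if P then v else 0) := by
      intro P _ v
      split_ifs <;> simp
    rw [hf, hsum]
    simp only [sub_smul, ite_smul, zero_smul, Finset.sum_sub_distrib, Finset.sum_neg_distrib,
      hneg]
    abel
  · intro i hi; simpa [hi] using hc _
  · intro i hi; simp [hi]
  · rintro i (⟨h1, h2⟩ | ⟨h1, h2⟩ | ⟨h1, h2⟩) <;> simp [PG, h1.ne, h1.ne']
  · intro i _
    dsimp only
    split_ifs
    exacts [hc _, le_rfl]
  · rintro i (⟨h1, h2⟩ | ⟨h1, h2⟩) <;> simp [PH, QH, h2.ne']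
  · intro i h1 h2
    have : ¬ QH i := by simp [QH, h1.ne, not_lt.2 h1.le]
    simp only [if_neg this, sub_zero, if_pos (show PH i from h2)]
    exact hc _
  · intro i h1 h2 hi
    have hi' : i ∉ β := by simpa using hi
    simp [PG, h2, hi']
  · intro i h1 h2 hi
    have hi' : i ∈ β := by simpa using hi
    have : ¬ QH i := by simp [QH, h1, hi']
    simp only [if_neg this, sub_zero, if_pos (show PH i from h2)]
    exact hc _

/-- Weakly stationary multipliers form a convex set. -/
theorem weakMult_convex {n l m p : ℕ} {f : Rn n → ℝ} {g : Fin l → Rn n → ℝ}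
    {h : Fin m → Rn n → ℝ} {G H : Fin p → Rn n → ℝ} {xb : Rn n} {κ : Type*} [Fintype κ]
    {w : κ → ℝ} (hw0 : ∀ b, 0 ≤ w b) (hw1 : ∑ b, w b = 1)
    {lam : κ → Fin l → ℝ} {eta : κ → Fin m → ℝ} {mu nu : κ → Fin p → ℝ}
    (hm : ∀ b, MpvcWeakMult f g h G H xb (lam b) (eta b) (mu b) (nu b)) :
    MpvcWeakMult f g h G H xb (fun i => ∑ b, w b * lam b i) (fun i => ∑ b, w b * eta b i)
      (fun i => ∑ b, w b * mu b i) (fun i => ∑ b, w b * nu b i) := by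
  have hnn : ∀ z : κ → ℝ, (∀ b, 0 ≤ z b) → 0 ≤ ∑ b, w b * z b := fun z hz =>
    Finset.sum_nonneg fun b _ => mul_nonneg (hw0 b) (hz b)
  have hzero : ∀ z : κ → ℝ, (∀ b, z b = 0) → ∑ b, w b * z b = 0 := fun z hz =>
    Finset.sum_eq_zero fun b _ => by rw [hz b, mul_zero]
  refine ⟨?_, fun i hi => hnn _ fun b => (hm b).2.1 i hi,
    fun i hi => hzero _ fun b => (hm b).2.2.1 i hi,
    fun i hi => hzero _ fun b => (hm b).2.2.2.1 i hi,
    fun i hi => hnn _ fun b => (hm b).2.2.2.2.1 i hi,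
    fun i hi => hzero _ fun b => (hm b).2.2.2.2.2.1 i hi,
    fun i h1 h2 => hnn _ fun b => (hm b).2.2.2.2.2.2 i h1 h2⟩
  have hcomb : ∀ {q : ℕ} (z : κ → Fin q → ℝ) (e : Fin q → Rn n),
      ∑ i, (∑ b, w b * z b i) • e i = ∑ b, w b • ∑ i, z b i • e i := by
    intro q z e
    simp only [Finset.sum_smul, Finset.smul_sum, smul_smul]
    exact Finset.sum_comm
  have hf : gradient f xb = ∑ b, w b • gradient f xb := by
    rw [← Finset.sum_smul, hw1, one_smul]
  simp only [hcomb]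
  rw [hf, ← Finset.sum_add_distrib, ← Finset.sum_add_distrib, ← Finset.sum_add_distrib,
    ← Finset.sum_sub_distrib]
  refine Finset.sum_eq_zero fun b _ => ?_
  rw [← smul_add, ← smul_add, ← smul_add, ← smul_sub, (hm b).1, smul_zero]

/-! ### From the branch multipliers to `C_d`-stationarity -/

/-- The multilinear weight at `x` of the vertex of the cube `[0,1]^p` that is the indicator vector
of `β`. -/
def cubeWeight {p : ℕ} (β : Finset (Fin p)) (x : Fin p → ℝ) : ℝ :=
  (∏ i ∈ β, x i) * ∏ i ∈ βᶜ, (1 - x i)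

theorem cubeWeight_nonneg {p : ℕ} {x : Fin p → ℝ} (hx : ∀ k, x k ∈ Icc (0 : ℝ) 1)
    (β : Finset (Fin p)) : 0 ≤ cubeWeight β x :=
  mul_nonneg (Finset.prod_nonneg fun i _ => (hx i).1)
    (Finset.prod_nonneg fun i _ => sub_nonneg.2 (hx i).2)

theorem sum_cubeWeight {p : ℕ} (x : Fin p → ℝ) : ∑ β, cubeWeight β x = 1 := by
  have := Fintype.prod_add x (fun i => 1 - x i)
  simpa [cubeWeight] using this.symm

/-- Stationarity on all branches implies `C_d`-stationarity, by Poincaré–Miranda applied to the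
multilinear interpolation of the branch multipliers. -/
theorem AStat_all_imp_CStat {n l m p : ℕ} (f : Rn n → ℝ) (g : Fin l → Rn n → ℝ)
    (h : Fin m → Rn n → ℝ) (G H : Fin p → Rn n → ℝ) (xb : Rn n)
    (hA : ∀ β : Finset (Fin p), MpvcAStat f g h G H xb (fun i => if i ∈ β then 1 else 0))
    (d : Fin p → ℝ) (hd : IsUnitIntervalVec d) : MpvcCStat f g h G H xb d := by
  classical
  choose lam eta mu nu hm hmu hnu using hA
  let M : Fin p → (Fin p → ℝ) → ℝ := fun i x => ∑ β, cubeWeight β x * mu β i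
  let K : Fin p → (Fin p → ℝ) → ℝ := fun i x => ∑ β, cubeWeight β x * nu β i
  have hcont : ∀ z : Finset (Fin p) → ℝ,
      Continuous fun x : Fin p → ℝ => ∑ β, cubeWeight β x * z β := by
    intro z
    unfold cubeWeight
    fun_prop
  let F : Fin p → (Fin p → ℝ) → ℝ := fun i x =>
    if G i xb = 0 ∧ H i xb = 0 then min ((1 - d i) * M i x + d i * K i x) (M i x) else 0
  obtain ⟨x, hx, hF⟩ := poincare_miranda F
    (by
      intro i
      by_cases hi : G i xb = 0 ∧ H i xb = 0
      · simp only [F, if_pos hi]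
        exact ((continuous_const.mul (hcont _)).add (continuous_const.mul (hcont _))).min (hcont _)
      · simp only [F, if_neg hi]
        exact continuous_const)
    (by
      intro i x hx hxi
      by_cases hi : G i xb = 0 ∧ H i xb = 0
      · simp only [F, if_pos hi]
        refine (min_le_right _ _).trans (Finset.sum_eq_zero fun β _ => ?_).le
        by_cases hiβ : i ∈ β
        · simp [cubeWeight, Finset.prod_eq_zero hiβ hxi]
        · rw [hmu β i hi.1 hi.2 (by simp [hiβ]), mul_zero]
      · simp only [F, if_neg hi, le_refl])
    (by
      intro i x hx hxi
      by_cases hi : G i xb = 0 ∧ H i xb = 0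
      · simp only [F, if_pos hi]
        have hM : 0 ≤ M i x := Finset.sum_nonneg fun β _ =>
          mul_nonneg (cubeWeight_nonneg hx β) ((hm β).2.2.2.2.1 i (Or.inr hi))
        have hK : 0 ≤ K i x := by
          refine Finset.sum_nonneg fun β _ => ?_
          by_cases hiβ : i ∈ β
          · exact mul_nonneg (cubeWeight_nonneg hx β) (hnu β i hi.1 hi.2 (by simp [hiβ]))
          · have : ∏ j ∈ βᶜ, (1 - x j) = 0 :=
              Finset.prod_eq_zero (Finset.mem_compl.2 hiβ) (by rw [hxi, sub_self])
            simp [cubeWeight, this]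
        exact le_min (add_nonneg (mul_nonneg (sub_nonneg.2 (hd i).2) hM)
          (mul_nonneg (hd i).1 hK)) hM
      · simp only [F, if_neg hi, le_refl])
  refine ⟨_, _, _, _, weakMult_convex (cubeWeight_nonneg hx) (sum_cubeWeight x) hm, ?_⟩
  intro i h1 h2
  change (M i x = 0 ∧ 0 ≤ K i x) ∨ (1 - d i) * M i x = -(d i * K i x)
  have hFi := hF i
  simp only [F, if_pos (And.intro h1 h2)] at hFi
  rcases min_choice ((1 - d i) * M i x + d i * K i x) (M i x) with hc | hc
  · right
    linarith
  · have hM : M i x = 0 := hc.symm.trans hFi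
    have hdK : 0 ≤ d i * K i x := by
      have := min_le_left ((1 - d i) * M i x + d i * K i x) (M i x)
      rw [hFi, hM] at this
      linarith
    -- for `d i = 0` the sign of `ν` is unknown, but the second alternative reduces to `μ = 0`
    rcases (hd i).1.eq_or_lt with hd0 | hd0
    · right
      rw [← hd0, hM]
      ring
    · exact Or.inl ⟨hM, nonneg_of_mul_nonneg_right hdK hd0⟩

/-- a local minimizer of the MPVC satisfying MPVC-GCQ is
C_d-stationary for every d ∈ [0,1]^p and P_α-stationary for every α ∈ {0,1}^p. -/
theorem mpvc_gcq_implies_CStat_and_PStat {n l m p : ℕ} (f : Rn n → ℝ) (g : Fin l → Rn n → ℝ)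
    (h : Fin m → Rn n → ℝ) (G H : Fin p → Rn n → ℝ) (xb : Rn n)
    (hf : Differentiable ℝ f) (hg : ∀ i, Differentiable ℝ (g i))
    (hh : ∀ i, Differentiable ℝ (h i)) (hG : ∀ i, Differentiable ℝ (G i))
    (hH : ∀ i, Differentiable ℝ (H i))
    (hfeas : xb ∈ MpvcFeasible g h G H)
    (hmin : IsLocalMinOn f (MpvcFeasible g h G H) xb)
    (hGCQ : polarCone (tangentCone' (MpvcFeasible g h G H) xb)
      = polarCone (MpvcLinCone g h G H xb)) :
    (∀ d : Fin p → ℝ, IsUnitIntervalVec d → MpvcCStat f g h G H xb d) ∧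
    (∀ α : Fin p → ℝ, IsBinaryVec α → MpvcPStat f g h G H xb α) := by
  have hpol : -gradient f xb ∈ polarCone (MpvcLinCone g h G H xb) :=
    hGCQ ▸ neg_gradient_mem_polarCone hf hmin
  have hC : ∀ d : Fin p → ℝ, IsUnitIntervalVec d → MpvcCStat f g h G H xb d :=
    AStat_all_imp_CStat f g h G H xb (branch_AStat f g h G H xb hpol)
  refine ⟨hC, fun α hα => ?_⟩
  have hα' : IsUnitIntervalVec α := fun i => by rcases hα i with h | h <;> simp [h]
  obtain ⟨lam, eta, mu, nu, hw, hcd⟩ := hC α hα'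
  refine ⟨lam, eta, mu, nu, hw, fun i h1 h2 h0 => ?_, fun i h1 h2 h3 => ?_⟩
  · rcases hcd i h1 h2 with h | h
    · exact h.1
    · simpa [h0] using h
  · rcases hcd i h1 h2 with h | h
    · exact Or.inl h
    · right
      simpa [h3] using h
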